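/- Let G = (V, E, w) be a weighted graph on vertex set {1,...,n} all of whose edge weights satisfy w(e) ∈ [γ, 2γ) for some γ > 0, let α be a positive integer, and partition V into 𝒮 = {u : δ_u ≤ γα} and ℒ = {u : δ_u > γα}, where δ_u = Σ_v w(u,v) is the weighted degree. For u ∈ ℒ set δ_u^ℒ = Σ_{v∈ℒ} w(u,v). Independently for each u ∈ ℒ with δ_u^ℒ > 0, draw α independent samples with replacement from the edges {(u,v) : v ∈ ℒ}, each sample choosing edge (u,v) with probability w(u,v)/δ_u^ℒ, and let Y_u^v be the number of times (u,v) is sampled at u. For x ∈ ℝⁿ define the estimator I_G = Σ_{u∈V} δ_u x_u² − Σ_{u∈𝒮} Σ_{v∈V} x_u x_v w(u,v) − Σ_{u∈ℒ} Σ_{v∈𝒮} x_u x_v w(u,v) − Σ_{u∈ℒ} (δ_u^ℒ/α) Σ_{v∈ℒ} x_u x_v Y_u^v. Then for every x ∈ ℝⁿ: the expectation of I_G equals the Laplacian quadratic form xᵀL(G)x, and the variance of I_G is at most (2/α²)·(Σ_{u∈V} δ_u x_u²)². -/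

import Mathlib

open scoped Classical

/-- Weighted degree of vertex `u`. -/
noncomputable def wdeg {n : ℕ} (w : Fin n → Fin n → ℝ) (u : Fin n) : ℝ :=
  ∑ v, w u v

/-- The heavy vertices ℒ = {u : δ_u > γα}. -/
noncomputable def heavySet {n : ℕ} (w : Fin n → Fin n → ℝ) (γ : ℝ) (α : ℕ) :
    Finset (Fin n) :=
  Finset.univ.filter (fun u => γ * (α : ℝ) < wdeg w u)

/-- The light vertices 𝒮 = {u : δ_u ≤ γα}. -/
noncomputable def lightSet {n : ℕ} (w : Fin n → Fin n → ℝ) (γ : ℝ) (α : ℕ) :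
    Finset (Fin n) :=
  Finset.univ.filter (fun u => wdeg w u ≤ γ * (α : ℝ))

/-- `δ_u^ℒ = Σ_{v ∈ ℒ} w(u,v)`. -/
noncomputable def wdegL {n : ℕ} (w : Fin n → Fin n → ℝ) (γ : ℝ) (α : ℕ) (u : Fin n) : ℝ :=
  ∑ v ∈ heavySet w γ α, w u v

/-- One-sample distribution at vertex `u`: a heavy vertex `u` with `δ_u^ℒ > 0` samples
the edge `(u,v)` (with `v` heavy) with probability `w(u,v)/δ_u^ℒ`; any other vertex
deterministically draws the dummy sample `u` itself. -/
noncomputable def oneProb {n : ℕ} (w : Fin n → Fin n → ℝ) (γ : ℝ) (α : ℕ)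
    (u v : Fin n) : ℝ :=
  if u ∈ heavySet w γ α ∧ 0 < wdegL w γ α u then
    (if v ∈ heavySet w γ α then w u v / wdegL w γ α u else 0)
  else (if v = u then 1 else 0)

/-- Probability of the outcome `ω` of drawing, independently for each vertex `u`,
`α` independent samples. -/
noncomputable def sampleProb {n : ℕ} (w : Fin n → Fin n → ℝ) (γ : ℝ) (α : ℕ)
    (ω : Fin n → Fin α → Fin n) : ℝ :=
  ∏ u, ∏ j, oneProb w γ α u (ω u j)

/-- `Y_u^v`: the number of times the edge `(u, v)` is sampled at `u`. -/
noncomputable def Ycount {n α : ℕ} (ω : Fin n → Fin α → Fin n) (u v : Fin n) : ℕ :=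
  (Finset.univ.filter (fun j : Fin α => ω u j = v)).card

/-- The estimator `I_G` for the Laplacian quadratic form. -/
noncomputable def estI {n : ℕ} (w : Fin n → Fin n → ℝ) (γ : ℝ) (α : ℕ)
    (x : Fin n → ℝ) (ω : Fin n → Fin α → Fin n) : ℝ :=
  ∑ u, wdeg w u * x u ^ 2
    - ∑ u ∈ lightSet w γ α, ∑ v, x u * x v * w u v
    - ∑ u ∈ heavySet w γ α, ∑ v ∈ lightSet w γ α, x u * x v * w u v
    - ∑ u ∈ heavySet w γ α, (wdegL w γ α u / (α : ℝ)) *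
        ∑ v ∈ heavySet w γ α, x u * x v * (Ycount ω u v : ℝ)

/-- The Laplacian quadratic form `xᵀ L(G) x`. -/
noncomputable def qform {n : ℕ} (w : Fin n → Fin n → ℝ) (x : Fin n → ℝ) : ℝ :=
  (1 / 2) * ∑ u, ∑ v, w u v * (x u - x v) ^ 2


section aux

variable {ι κ : Type*} [Fintype ι] [Fintype κ] [DecidableEq ι]

theorem aux_prod (p h : ι → κ → ℝ) :
    ∑ f : ι → κ, (∏ i, p i (f i)) * ∏ i, h i (f i) = ∏ i, ∑ k, p i k * h i k := by
  rw [Fintype.prod_sum]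
  exact Finset.sum_congr rfl fun f _ => by rw [Finset.prod_mul_distrib]

theorem aux_one (p : ι → κ → ℝ) (hp : ∀ i, ∑ k, p i k = 1) :
    ∑ f : ι → κ, (∏ i, p i (f i)) = 1 := by
  have := aux_prod p (fun _ _ => 1)
  simpa [hp] using this

theorem aux_single (p : ι → κ → ℝ) (hp : ∀ i, ∑ k, p i k = 1) (i : ι) (g : κ → ℝ) :
    ∑ f : ι → κ, (∏ i, p i (f i)) * g (f i) = ∑ k, p i k * g k := by
  have := aux_prod p (fun j k => if j = i then g k else 1)
  simp only [Finset.prod_ite_eq', Finset.mem_univ, if_true] at this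
  rw [this, Finset.prod_eq_single i]
  · simp
  · intro j _ hj
    simp [hj, hp]
  · simp

theorem aux_pair (p : ι → κ → ℝ) (hp : ∀ i, ∑ k, p i k = 1) (i j : ι) (hij : i ≠ j)
    (g h : κ → ℝ) (hg : ∑ k, p i k * g k = 0) :
    ∑ f : ι → κ, (∏ i, p i (f i)) * (g (f i) * h (f j)) = 0 := by
  have := aux_prod p (fun l k => (if l = i then g k else 1) * (if l = j then h k else 1))
  simp only [Finset.prod_mul_distrib, Finset.prod_ite_eq', Finset.mem_univ, if_true] at this
  rw [this]
  apply Finset.prod_eq_zero (Finset.mem_univ i)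
  simpa [hij] using hg

theorem aux_mean (p : ι → κ → ℝ) (hp : ∀ i, ∑ k, p i k = 1) (g : ι → κ → ℝ) :
    ∑ f : ι → κ, (∏ i, p i (f i)) * ∑ i, g i (f i) = ∑ i, ∑ k, p i k * g i k := by
  simp_rw [Finset.mul_sum]
  rw [Finset.sum_comm]
  exact Finset.sum_congr rfl fun i _ => aux_single p hp i (g i)

theorem aux_var (p : ι → κ → ℝ) (hp : ∀ i, ∑ k, p i k = 1) (g : ι → κ → ℝ)
    (hg : ∀ i, ∑ k, p i k * g i k = 0) :
    ∑ f : ι → κ, (∏ i, p i (f i)) * (∑ i, g i (f i)) ^ 2 = ∑ i, ∑ k, p i k * g i k ^ 2 := by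
  simp_rw [sq (∑ i, _), Finset.sum_mul_sum, Finset.mul_sum]
  rw [Finset.sum_comm]
  refine Finset.sum_congr rfl fun i _ => ?_
  rw [Finset.sum_comm, Finset.sum_eq_single i]
  · rw [← aux_single p hp i (fun k => g i k ^ 2)]
    simp_rw [sq]
  · intro j _ hj
    exact aux_pair p hp i j hj.symm (g i) (g j) (hg i)
  · simp

end aux

/-- contribution of one sample `k` at `u` -/
noncomputable def hfun {n : ℕ} (w : Fin n → Fin n → ℝ) (γ : ℝ) (α : ℕ)
    (x : Fin n → ℝ) (u k : Fin n) : ℝ :=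
  if u ∈ heavySet w γ α then
    (wdegL w γ α u / (α : ℝ)) * (if k ∈ heavySet w γ α then x u * x k else 0) else 0

noncomputable def mfun {n : ℕ} (w : Fin n → Fin n → ℝ) (γ : ℝ) (α : ℕ)
    (x : Fin n → ℝ) (u : Fin n) : ℝ :=
  if u ∈ heavySet w γ α then
    (1 / (α : ℝ)) * ∑ v ∈ heavySet w γ α, x u * x v * w u v else 0

theorem sum_oneProb {n : ℕ} (w : Fin n → Fin n → ℝ) (γ : ℝ) (α : ℕ) (u : Fin n) :
    ∑ v, oneProb w γ α u v = 1 := by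
  unfold oneProb
  by_cases h : u ∈ heavySet w γ α ∧ 0 < wdegL w γ α u
  · simp only [h, and_self, if_true]
    rw [Finset.sum_ite_mem, Finset.univ_inter, ← Finset.sum_div]
    exact div_self h.2.ne'
  · simp [h]

theorem oneProb_nonneg {n : ℕ} (w : Fin n → Fin n → ℝ) (γ : ℝ) (α : ℕ)
    (hnonneg : ∀ u v, 0 ≤ w u v) (u v : Fin n) : 0 ≤ oneProb w γ α u v := by
  unfold oneProb
  split_ifs with h
  · exact div_nonneg (hnonneg _ _) h.2.le
  all_goals norm_num

theorem wdegL_zero {n : ℕ} (w : Fin n → Fin n → ℝ) (γ : ℝ) (α : ℕ)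
    (hnonneg : ∀ u v, 0 ≤ w u v) (u : Fin n) (h : ¬ 0 < wdegL w γ α u) :
    wdegL w γ α u = 0 ∧ ∀ v ∈ heavySet w γ α, w u v = 0 := by
  have h0 : wdegL w γ α u = 0 :=
    le_antisymm (not_lt.mp h) (Finset.sum_nonneg fun v _ => hnonneg u v)
  exact ⟨h0, (Finset.sum_eq_zero_iff_of_nonneg fun v _ => hnonneg u v).mp h0⟩

theorem mean_h {n : ℕ} (w : Fin n → Fin n → ℝ) (γ : ℝ) (α : ℕ)
    (hnonneg : ∀ u v, 0 ≤ w u v) (x : Fin n → ℝ) (u : Fin n) :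
    ∑ k, oneProb w γ α u k * hfun w γ α x u k = mfun w γ α x u := by
  unfold mfun hfun
  by_cases hu : u ∈ heavySet w γ α
  · simp only [hu, if_true]
    by_cases hd : 0 < wdegL w γ α u
    · simp only [oneProb, hu, hd, and_self, if_true]
      rw [Finset.mul_sum, ← Finset.univ_inter (heavySet w γ α), ← Finset.sum_ite_mem]
      refine Finset.sum_congr rfl fun k _ => ?_
      simp only [Finset.univ_inter]
      split_ifs
      · field_simp
      · simp
    · obtain ⟨h0, h1⟩ := wdegL_zero w γ α hnonneg u hd
      rw [Finset.sum_congr rfl (g := fun _ => 0) (s₂ := heavySet w γ α)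
        (fun v hv => by rw [h1 v hv, mul_zero])]
      simp [h0]
  · simp [hu]

theorem sq_h {n : ℕ} (w : Fin n → Fin n → ℝ) (γ : ℝ) (α : ℕ) (hα : 0 < α)
    (hnonneg : ∀ u v, 0 ≤ w u v)
    (hweights : ∀ u v, 0 < w u v → γ ≤ w u v ∧ w u v < 2 * γ)
    (x : Fin n → ℝ) (u : Fin n) :
    α * ∑ k, oneProb w γ α u k * hfun w γ α x u k ^ 2 ≤
      2 / (α : ℝ) ^ 2 * ((wdeg w u * x u ^ 2) * ∑ v, wdeg w v * x v ^ 2) := by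
  have ha : (0 : ℝ) < α := by exact_mod_cast hα
  have hdeg : ∀ v, 0 ≤ wdeg w v := fun v => Finset.sum_nonneg fun k _ => hnonneg v k
  have hrhs : 0 ≤ 2 / (α : ℝ) ^ 2 * ((wdeg w u * x u ^ 2) * ∑ v, wdeg w v * x v ^ 2) := by
    have : 0 ≤ ∑ v, wdeg w v * x v ^ 2 :=
      Finset.sum_nonneg fun v _ => mul_nonneg (hdeg v) (sq_nonneg _)
    have := hdeg u
    positivity
  by_cases hu : u ∈ heavySet w γ α
  swap
  · simpa [hfun, hu] using hrhs
  by_cases hd : 0 < wdegL w γ α u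
  swap
  · obtain ⟨h0, h1⟩ := wdegL_zero w γ α hnonneg u hd
    simpa [hfun, h0] using hrhs
  have hle : wdegL w γ α u ≤ wdeg w u :=
    Finset.sum_le_sum_of_subset_of_nonneg (Finset.subset_univ _) fun v _ _ => hnonneg u v
  rw [Finset.mul_sum, Finset.mul_sum, Finset.mul_sum]
  refine Finset.sum_le_sum fun k _ => ?_
  simp only [oneProb, hfun, hu, hd, and_self, if_true]
  by_cases hk : k ∈ heavySet w γ α
  · simp only [hk, if_true]
    have hk' : γ * α < wdeg w k := by simpa [heavySet] using hk
    have hw : α * w u k ≤ 2 * wdeg w k := by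
      rcases (hnonneg u k).eq_or_lt with h | h
      · rw [← h]; have := hdeg k; linarith
      · have := (hweights u k h).2
        nlinarith
    have e1 : α * (w u k / wdegL w γ α u * (wdegL w γ α u / α * (x u * x k)) ^ 2)
        = 1 / (α : ℝ) ^ 2 * (wdegL w γ α u * (α * w u k) * (x u ^ 2 * x k ^ 2)) := by
      field_simp
    have e2 : 2 / (α : ℝ) ^ 2 * (wdeg w u * x u ^ 2 * (wdeg w k * x k ^ 2))
        = 1 / (α : ℝ) ^ 2 * (wdeg w u * (2 * wdeg w k) * (x u ^ 2 * x k ^ 2)) := by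
      ring
    rw [e1, e2]
    have := hdeg u
    have := hnonneg u k
    gcongr
  · simp only [hk, if_false]
    have := hdeg u
    have := hdeg k
    simp only [zero_mul, mul_zero]
    positivity

theorem est_eq {n : ℕ} (w : Fin n → Fin n → ℝ) (γ : ℝ) (α : ℕ) (hα : 0 < α)
    (hsym : ∀ u v, w u v = w v u)
    (x : Fin n → ℝ) (ω : Fin n → Fin α → Fin n) :
    estI w γ α x ω - qform w x =
      - ∑ u, ∑ j, (hfun w γ α x u (ω u j) - mfun w γ α x u) := by
  have ha : (α : ℝ) ≠ 0 := by exact_mod_cast hα.ne'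
  have hq : qform w x = ∑ u, wdeg w u * x u ^ 2 - ∑ u, ∑ v, x u * x v * w u v := by
    have h1 : ∑ u, ∑ v, w u v * x v ^ 2 = ∑ u, wdeg w u * x u ^ 2 := by
      rw [Finset.sum_comm]
      refine Finset.sum_congr rfl fun u _ => ?_
      rw [wdeg, Finset.sum_mul]
      exact Finset.sum_congr rfl fun v _ => by rw [hsym]
    have h2 : ∑ u, ∑ v, w u v * x u ^ 2 = ∑ u, wdeg w u * x u ^ 2 := by
      refine Finset.sum_congr rfl fun u _ => ?_
      rw [wdeg, Finset.sum_mul]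
    have h3 : ∑ u, ∑ v, w u v * (x u - x v) ^ 2 = ∑ u, ∑ v, w u v * x u ^ 2
        + ∑ u, ∑ v, w u v * x v ^ 2 - 2 * ∑ u, ∑ v, x u * x v * w u v := by
      simp only [Finset.mul_sum, ← Finset.sum_add_distrib, ← Finset.sum_sub_distrib]
      refine Finset.sum_congr rfl fun u _ => Finset.sum_congr rfl fun v _ => ?_
      ring
    rw [qform, h3, h1, h2]; ring
  have hsplit : ∀ f : Fin n → ℝ,
      ∑ u, f u = ∑ u ∈ lightSet w γ α, f u + ∑ u ∈ heavySet w γ α, f u := by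
    intro f
    rw [lightSet, heavySet, ← Finset.sum_filter_add_sum_filter_not _ (fun u => wdeg w u ≤ γ * α)]
    simp only [not_le]
  have hm : ∑ u, ∑ j : Fin α, mfun w γ α x u
      = ∑ u ∈ heavySet w γ α, ∑ v ∈ heavySet w γ α, x u * x v * w u v := by
    rw [← Finset.univ_inter (heavySet w γ α), ← Finset.sum_ite_mem]
    refine Finset.sum_congr rfl fun u _ => ?_
    simp only [mfun, Finset.univ_inter, Finset.sum_const, Finset.card_univ, Fintype.card_fin,
      nsmul_eq_mul]
    split_ifs
    · field_simp
    · simp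
  have hh : ∑ u, ∑ j : Fin α, hfun w γ α x u (ω u j)
      = ∑ u ∈ heavySet w γ α, (wdegL w γ α u / (α : ℝ)) *
        ∑ v ∈ heavySet w γ α, x u * x v * (Ycount ω u v : ℝ) := by
    have hY : ∀ u, ∑ v ∈ heavySet w γ α, x u * x v * (Ycount ω u v : ℝ)
        = ∑ j, if ω u j ∈ heavySet w γ α then x u * x (ω u j) else 0 := by
      intro u
      simp only [Ycount, Finset.card_filter, Nat.cast_sum, Finset.mul_sum]
      rw [Finset.sum_comm]
      refine Finset.sum_congr rfl fun j _ => ?_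
      simp
    conv_rhs => rw [← Finset.univ_inter (heavySet w γ α), ← Finset.sum_ite_mem]
    refine Finset.sum_congr rfl fun u _ => ?_
    simp only [hfun, Finset.univ_inter]
    split_ifs
    · rw [hY, Finset.mul_sum]
    · simp
  simp only [Finset.sum_sub_distrib]
  rw [hm, hh, hq, estI, hsplit (fun u => ∑ v, x u * x v * w u v)]
  have : ∑ u ∈ heavySet w γ α, ∑ v, x u * x v * w u v
      = ∑ u ∈ heavySet w γ α, ∑ v ∈ lightSet w γ α, x u * x v * w u v
      + ∑ u ∈ heavySet w γ α, ∑ v ∈ heavySet w γ α, x u * x v * w u v := by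
    rw [← Finset.sum_add_distrib]
    exact Finset.sum_congr rfl fun u _ => hsplit _
  rw [this]
  ring

theorem stmt_11 (n : ℕ) (w : Fin n → Fin n → ℝ) (γ : ℝ) (α : ℕ)
    (hγ : 0 < γ) (hα : 0 < α)
    (hsym : ∀ u v, w u v = w v u) (hnonneg : ∀ u v, 0 ≤ w u v)
    (hdiag : ∀ u, w u u = 0)
    (hweights : ∀ u v, 0 < w u v → γ ≤ w u v ∧ w u v < 2 * γ)
    (x : Fin n → ℝ) :
    (∑ ω : Fin n → Fin α → Fin n, sampleProb w γ α ω * estI w γ α x ω) = qform w x ∧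
      (∑ ω : Fin n → Fin α → Fin n,
          sampleProb w γ α ω * (estI w γ α x ω - qform w x) ^ 2)
        ≤ 2 / (α : ℝ) ^ 2 * (∑ u, wdeg w u * x u ^ 2) ^ 2 := by
  have hp1 : ∀ u, ∑ k, oneProb w γ α u k = 1 := sum_oneProb w γ α
  -- distribution of the samples at one vertex
  have hp2 : ∀ u, ∑ s : Fin α → Fin n, (∏ j, oneProb w γ α u (s j)) = 1 := fun u =>
    aux_one (fun _ : Fin α => oneProb w γ α u) fun _ => hp1 u
  have hc : ∀ u, ∑ k, oneProb w γ α u k * (hfun w γ α x u k - mfun w γ α x u) = 0 := by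
    intro u
    simp only [mul_sub, Finset.sum_sub_distrib, ← Finset.sum_mul]
    rw [mean_h w γ α hnonneg, hp1]; ring
  have hc2 : ∀ u, ∑ s : Fin α → Fin n, (∏ j, oneProb w γ α u (s j)) *
      ∑ j, (hfun w γ α x u (s j) - mfun w γ α x u) = 0 := by
    intro u
    have := aux_mean (fun _ : Fin α => oneProb w γ α u) (fun _ => hp1 u)
      (fun _ k => hfun w γ α x u k - mfun w γ α x u)
    rw [this]
    simp [hc]
  have hmean := aux_mean (fun u (s : Fin α → Fin n) => ∏ j, oneProb w γ α u (s j)) hp2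
    (fun u s => ∑ j, (hfun w γ α x u (s j) - mfun w γ α x u))
  have hvar := aux_var (fun u (s : Fin α → Fin n) => ∏ j, oneProb w γ α u (s j)) hp2
    (fun u s => ∑ j, (hfun w γ α x u (s j) - mfun w γ α x u)) hc2
  have hone := aux_one (fun u (s : Fin α → Fin n) => ∏ j, oneProb w γ α u (s j)) hp2
  simp only [hc2, Finset.sum_const_zero] at hmean
  constructor
  · have : ∀ ω, estI w γ α x ω = qform w x -
        ∑ u, ∑ j, (hfun w γ α x u (ω u j) - mfun w γ α x u) := fun ω => by
      have := est_eq w γ α hα hsym x ω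
      linarith
    simp only [this, sampleProb, mul_sub (∏ u, _), Finset.sum_sub_distrib (f := fun ω => _ * qform w x),
      ← Finset.sum_mul]
    rw [hone, hmean]; ring
  · simp only [est_eq w γ α hα hsym x, neg_sq, sampleProb]
    rw [hvar, sq (∑ u, _), Finset.sum_mul, Finset.mul_sum]
    refine Finset.sum_le_sum fun u _ => le_trans ?_ (sq_h w γ α hα hnonneg hweights x u)
    have := aux_var (fun _ : Fin α => oneProb w γ α u) (fun _ => hp1 u)
      (fun _ k => hfun w γ α x u k - mfun w γ α x u) (fun _ => hc u)
    rw [this]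
    simp only [Finset.sum_const, Finset.card_univ, Fintype.card_fin, nsmul_eq_mul]
    refine mul_le_mul_of_nonneg_left ?_ (Nat.cast_nonneg _)
    have e : ∑ k, oneProb w γ α u k * (hfun w γ α x u k - mfun w γ α x u) ^ 2
        = ∑ k, oneProb w γ α u k * hfun w γ α x u k ^ 2 - mfun w γ α x u ^ 2 := by
      have : ∀ k, oneProb w γ α u k * (hfun w γ α x u k - mfun w γ α x u) ^ 2
        = oneProb w γ α u k * hfun w γ α x u k ^ 2
          - 2 * mfun w γ α x u * (oneProb w γ α u k * hfun w γ α x u k)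
          + mfun w γ α x u ^ 2 * oneProb w γ α u k := fun k => by ring
      simp only [this, Finset.sum_add_distrib, Finset.sum_sub_distrib, ← Finset.mul_sum]
      rw [mean_h w γ α hnonneg, hp1]; ring
    rw [e]
    linarith [sq_nonneg (mfun w γ α x u)]
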